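/- Let P be a probability measure on Z, let π be a prior probability measure on Θ, and let d > 0, κ ≥ 1 satisfy the prior mass condition π({θ ∈ Θ : R_P(θ) − R_P* ≤ s}) ≥ s^d/κ for all s ∈ (0,1]. Assume C²d ≤ 8n and set α = 2√(2d)/(√n · C). Then E_S E_{θ∼ρ_S(π,α)}[R_P(θ)] ≤ R_P* + (C/2)√(d/(2n)) · ( (1/2) log(8 e⁴ n/(d C²)) + (1/d) log κ ), where E_S denotes expectation over the i.i.d. n-sample S from P. -/

import Mathlib

open MeasureTheory ProbabilityTheory
open scoped Classical

noncomputable section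

/-- Kullback–Leibler divergence of `ρ` with respect to `π`. -/
def klDiv {Ω : Type*} [MeasurableSpace Ω] (ρ π : Measure Ω) : ENNReal :=
  if ρ ≪ π ∧ Integrable (llr ρ π) ρ then ENNReal.ofReal (∫ x, llr ρ π x ∂ρ) else ⊤

/-- The prediction risk `R_P(θ) = E_{Z∼P}[ℓ(Z,θ)]`. -/
def risk {Z Θ : Type*} [MeasurableSpace Z] (ℓ : Z → Θ → ℝ) (P : Measure Z) (θ : Θ) : ℝ :=
  ∫ z, ℓ z θ ∂P

/-- The optimal risk `R_P* = inf_θ R_P(θ)`. -/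
def optRisk {Z Θ : Type*} [MeasurableSpace Z] (ℓ : Z → Θ → ℝ) (P : Measure Z) : ℝ :=
  ⨅ θ, risk ℓ P θ

/-- The empirical risk `R̂_S(θ) = (1/n) ∑ᵢ ℓ(Zᵢ,θ)`. -/
def empRisk {Z Θ : Type*} {n : ℕ} (ℓ : Z → Θ → ℝ) (S : Fin n → Z) (θ : Θ) : ℝ :=
  (∑ i, ℓ (S i) θ) / n

/-- The PAC-Bayes risk estimate `R̂_S(ρ,π,α) = E_{θ∼ρ}[R̂_S(θ)] + KL(ρ∥π)/(αn)`. -/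
def riskEstimate {Z Θ : Type*} [MeasurableSpace Θ] {n : ℕ} (ℓ : Z → Θ → ℝ) (S : Fin n → Z)
    (ρ π : Measure Θ) (α : ℝ) : ℝ :=
  (∫ θ, empRisk ℓ S θ ∂ρ) + (klDiv ρ π).toReal / (α * n)


/-- The Gibbs posterior `ρ_S(π,α)`, with density proportional to
`exp(−αn R̂_S)` with respect to the prior `π`. -/
def gibbs {Z Θ : Type*} [MeasurableSpace Θ] {n : ℕ} (ℓ : Z → Θ → ℝ) (π : Measure Θ)
    (α : ℝ) (S : Fin n → Z) : Measure Θ :=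
  π.withDensity fun θ => ENNReal.ofReal
    (Real.exp (-(α * n) * empRisk ℓ S θ) / ∫ ϑ, Real.exp (-(α * n) * empRisk ℓ S ϑ) ∂π)

/-!
The Gibbs posterior minimises the estimate `E_ρ[R̂_S] + KL(ρ∥π)/(αn)` over `ρ`, so it can be
compared with the prior conditioned on the sublevel set `{R_P ≤ R_P* + s}`, whose divergence from
`π` is minus the logarithm of the prior mass of that set. Replacing `R̂_S` by `R_P` under the
posterior costs at most `log E_π[exp(αn(R_P − R̂_S))]/(αn)` by Jensen's inequality; Jensen again, now
for the logarithm, and Hoeffding's lemma bound the expectation of this cost by `αC²/8`.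
The given `α` makes the deviation cost `αC²/8` and the dimension cost `d/(αn)` equal; this common
value is the `s` at which the prior mass condition is used.
-/

section Entropy

variable {Ω : Type*} [MeasurableSpace Ω] {μ ν : Measure Ω} {f g : Ω → ℝ}

theorem exp_integral_le_integral_exp [IsProbabilityMeasure μ] (hf : Integrable f μ)
    (hexp : Integrable (fun x ↦ Real.exp (f x)) μ) :
    Real.exp (∫ x, f x ∂μ) ≤ ∫ x, Real.exp (f x) ∂μ :=
  convexOn_exp.map_integral_le Real.continuous_exp.continuousOn isClosed_univ
    (ae_of_all _ fun _ ↦ Set.mem_univ _) hf hexp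

theorem integral_tilted_le_log_sub_log [IsProbabilityMeasure μ]
    (hf : Integrable (fun x ↦ Real.exp (f x)) μ)
    (hfg : Integrable (fun x ↦ Real.exp (f x + g x)) μ) (hg : Integrable g (μ.tilted f)) :
    ∫ x, g x ∂(μ.tilted f) ≤
      Real.log (∫ x, Real.exp (f x + g x) ∂μ) - Real.log (∫ x, Real.exp (f x) ∂μ) := by
  have := isProbabilityMeasure_tilted hf
  have hexp : Integrable (fun x ↦ Real.exp (g x)) (μ.tilted f) := by
    simpa only [integrable_tilted_iff hf, smul_eq_mul, ← Real.exp_add] using hfg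
  rw [← Real.log_div (integral_exp_pos hfg).ne' (integral_exp_pos hf).ne',
    Real.le_log_iff_exp_le (div_pos (integral_exp_pos hfg) (integral_exp_pos hf))]
  exact (exp_integral_le_integral_exp hg hexp).trans_eq (integral_exp_tilted f g)

theorem klDiv_eq_informationTheory_klDiv (h : μ.real Set.univ = ν.real Set.univ) :
    klDiv μ ν = InformationTheory.klDiv μ ν := by
  simp only [klDiv, InformationTheory.klDiv_def, h, add_sub_cancel_right]

/-- The easy half of the Donsker–Varadhan variational formula. -/
theorem integral_sub_klDiv_le_log_integral_exp [IsProbabilityMeasure μ] [IsProbabilityMeasure ν]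
    (hμν : klDiv μ ν ≠ ⊤) (hfμ : Integrable f μ)
    (hfν : Integrable (fun x ↦ Real.exp (f x)) ν) :
    ∫ x, f x ∂μ - (klDiv μ ν).toReal ≤ Real.log (∫ x, Real.exp (f x) ∂ν) := by
  have := isProbabilityMeasure_tilted hfν
  rw [klDiv_eq_informationTheory_klDiv (by simp)] at hμν ⊢
  obtain ⟨hac, hllr⟩ := InformationTheory.klDiv_ne_top_iff.1 hμν
  have hnonneg := InformationTheory.integral_llr_add_sub_measure_univ_nonneg
    (hac.trans (absolutelyContinuous_tilted hfν)) (integrable_llr_tilted_right hac hfμ hllr hfν)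
  rw [integral_llr_tilted_right hac hfμ hfν hllr, probReal_univ, probReal_univ] at hnonneg
  rw [InformationTheory.toReal_klDiv_of_measure_eq hac (by simp)]
  linarith

theorem llr_cond_self [SigmaFinite μ] {s : Set Ω} (hs : MeasurableSet s) (hμs : μ s ≠ 0) :
    llr μ[|s] μ =ᵐ[μ[|s]] fun _ ↦ -Real.log (μ.real s) := by
  have hrn : (μ[|s]).rnDeriv μ =ᵐ[μ] (μ s)⁻¹ • s.indicator 1 :=
    (Measure.rnDeriv_smul_left_of_ne_top' (μ.restrict s) μ (ENNReal.inv_ne_top.2 hμs)).trans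
      ((Measure.rnDeriv_restrict_self μ hs).const_smul _)
  filter_upwards [cond_absolutelyContinuous.ae_le hrn, ae_cond_mem hs] with x hx hxs
  simp [llr, hx, hxs, Measure.real]

theorem klDiv_cond_self [IsFiniteMeasure μ] {s : Set Ω} (hs : MeasurableSet s) (hμs : μ s ≠ 0) :
    klDiv μ[|s] μ = ENNReal.ofReal (-Real.log (μ.real s)) := by
  have := cond_isProbabilityMeasure hμs
  have hllr := llr_cond_self hs hμs
  rw [klDiv, if_pos ⟨cond_absolutelyContinuous, (integrable_congr hllr).2 (integrable_const _)⟩,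
    integral_congr_ae hllr]
  simp

end Entropy

section BoundedIntegrals

variable {Ω Ω' : Type*} [MeasurableSpace Ω] [MeasurableSpace Ω'] {μ : Measure Ω}
  {ν : Measure Ω'} {a b : ℝ}

theorem integral_mem_Icc [IsProbabilityMeasure μ] {f : Ω → ℝ} (hf : AEMeasurable f μ)
    (hfab : ∀ᵐ x ∂μ, f x ∈ Set.Icc a b) : ∫ x, f x ∂μ ∈ Set.Icc a b :=
  (convex_Icc a b).integral_mem isClosed_Icc hfab (.of_mem_Icc a b hf hfab)

theorem integrable_exp_of_mem_Icc [IsFiniteMeasure μ] {f : Ω → ℝ} (hf : AEMeasurable f μ)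
    (hfab : ∀ᵐ x ∂μ, f x ∈ Set.Icc a b) : Integrable (fun x ↦ Real.exp (f x)) μ := by
  simpa only [one_mul] using integrable_exp_mul_of_mem_Icc (t := 1) hf hfab

theorem log_integral_exp_mem_Icc [IsProbabilityMeasure μ] {f : Ω → ℝ} (hf : AEMeasurable f μ)
    (hfab : ∀ᵐ x ∂μ, f x ∈ Set.Icc a b) :
    Real.log (∫ x, Real.exp (f x) ∂μ) ∈ Set.Icc a b := by
  have hexp := integral_mem_Icc (a := Real.exp a) (b := Real.exp b)
    (Real.measurable_exp.comp_aemeasurable hf)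
    (hfab.mono fun x hx ↦ ⟨Real.exp_le_exp.2 hx.1, Real.exp_le_exp.2 hx.2⟩)
  have hpos := (Real.exp_pos a).trans_le hexp.1
  exact ⟨(Real.le_log_iff_exp_le hpos).2 hexp.1, (Real.log_le_iff_le_exp hpos).2 hexp.2⟩

variable {F : Ω → Ω' → ℝ}

theorem measurable_log_integral_exp [SFinite ν] (hF : Measurable (Function.uncurry F)) :
    Measurable fun x ↦ Real.log (∫ y, Real.exp (F x y) ∂ν) :=
  hF.exp.stronglyMeasurable.integral_prod_right.measurable.log

theorem integrable_log_integral_exp [IsFiniteMeasure μ] [IsProbabilityMeasure ν]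
    (hF : Measurable (Function.uncurry F)) (hFab : ∀ x y, F x y ∈ Set.Icc a b) :
    Integrable (fun x ↦ Real.log (∫ y, Real.exp (F x y) ∂ν)) μ :=
  .of_mem_Icc a b (measurable_log_integral_exp hF).aemeasurable <| ae_of_all _ fun x ↦
    log_integral_exp_mem_Icc hF.of_uncurry_left.aemeasurable (ae_of_all _ (hFab x))

theorem integral_log_integral_exp_le [IsProbabilityMeasure μ] [IsProbabilityMeasure ν]
    (hF : Measurable (Function.uncurry F)) (hFab : ∀ x y, F x y ∈ Set.Icc a b) {c : ℝ}
    (hc : ∀ y, ∫ x, Real.exp (F x y) ∂μ ≤ Real.exp c) :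
    ∫ x, Real.log (∫ y, Real.exp (F x y) ∂ν) ∂μ ≤ c := by
  have hexp : Integrable (Function.uncurry fun x y ↦ Real.exp (F x y)) (μ.prod ν) :=
    integrable_exp_of_mem_Icc hF.aemeasurable (ae_of_all _ fun z ↦ hFab z.1 z.2)
  have hexpx (x : Ω) : Integrable (fun y ↦ Real.exp (F x y)) ν :=
    integrable_exp_of_mem_Icc hF.of_uncurry_left.aemeasurable (ae_of_all _ (hFab x))
  have hexplog (x : Ω) :
      Real.exp (Real.log (∫ y, Real.exp (F x y) ∂ν)) = ∫ y, Real.exp (F x y) ∂ν :=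
    Real.exp_log (integral_exp_pos (hexpx x))
  have hexp_le : Real.exp (∫ x, Real.log (∫ y, Real.exp (F x y) ∂ν) ∂μ) ≤ Real.exp c :=
    calc Real.exp (∫ x, Real.log (∫ y, Real.exp (F x y) ∂ν) ∂μ)
      _ ≤ ∫ x, Real.exp (Real.log (∫ y, Real.exp (F x y) ∂ν)) ∂μ :=
        exp_integral_le_integral_exp (integrable_log_integral_exp hF hFab)
          (hexp.integral_prod_left.congr (ae_of_all _ fun x ↦ (hexplog x).symm))
      _ = ∫ y, ∫ x, Real.exp (F x y) ∂μ ∂ν := by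
        simp_rw [hexplog]
        exact integral_integral_swap hexp
      _ ≤ ∫ _, Real.exp c ∂ν := integral_mono hexp.integral_prod_right (integrable_const _) hc
      _ = Real.exp c := by simp
  exact Real.exp_le_exp.1 hexp_le

end BoundedIntegrals

section Risk

variable {Z Θ : Type*} {ℓ : Z → Θ → ℝ} {a b : ℝ} {n : ℕ}

theorem empRisk_mem_Icc (hn : 0 < n)
    (hℓ : ∀ z θ, ℓ z θ ∈ Set.Icc a b) (S : Fin n → Z) (θ : Θ) :
    empRisk ℓ S θ ∈ Set.Icc a b := by
  have hn' : (0 : ℝ) < n := by exact_mod_cast hn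
  have hlower := Finset.card_nsmul_le_sum Finset.univ (fun i ↦ ℓ (S i) θ) a fun i _ ↦ (hℓ _ θ).1
  have hupper := Finset.sum_le_card_nsmul Finset.univ (fun i ↦ ℓ (S i) θ) b fun i _ ↦ (hℓ _ θ).2
  rw [Finset.card_univ, Fintype.card_fin, nsmul_eq_mul] at hlower hupper
  exact ⟨(le_div_iff₀' hn').2 hlower, (div_le_iff₀' hn').2 hupper⟩

variable [MeasurableSpace Z] {P : Measure Z}

theorem integral_empRisk [IsProbabilityMeasure P] (hn : 0 < n) {θ : Θ}
    (hℓint : Integrable (fun z ↦ ℓ z θ) P) :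
    ∫ S : Fin n → Z, empRisk ℓ S θ ∂(Measure.pi fun _ ↦ P) = risk ℓ P θ := by
  have hmean (i : Fin n) : ∫ S : Fin n → Z, ℓ (S i) θ ∂(Measure.pi fun _ ↦ P) = risk ℓ P θ :=
    integral_comp_eval (μ := fun _ : Fin n ↦ P) hℓint.aestronglyMeasurable
  have hn' : (n : ℝ) ≠ 0 := by exact_mod_cast hn.ne'
  simp only [empRisk]
  rw [integral_div, integral_finsetSum _ fun i _ ↦
    integrable_comp_eval (μ := fun _ : Fin n ↦ P) (i := i) hℓint]
  simp [hmean, hn']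

theorem hasSubgaussianMGF_empRisk_sub_risk [IsProbabilityMeasure P] (hn : 0 < n) {θ : Θ}
    (hℓmeas : AEMeasurable (fun z ↦ ℓ z θ) P) (hℓ : ∀ᵐ z ∂P, ℓ z θ ∈ Set.Icc a b) :
    HasSubgaussianMGF (fun S : Fin n → Z ↦ empRisk ℓ S θ - risk ℓ P θ)
      ((‖b - a‖₊ / 2) ^ 2 / n) (Measure.pi fun _ ↦ P) := by
  have hn' : (n : ℝ) ≠ 0 := by exact_mod_cast hn.ne'
  have hmean (i : Fin n) : (Measure.pi fun _ : Fin n ↦ P)[fun S ↦ ℓ (S i) θ] = risk ℓ P θ :=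
    integral_comp_eval (μ := fun _ : Fin n ↦ P) hℓmeas.aestronglyMeasurable
  have hindep : iIndepFun (fun i (S : Fin n → Z) ↦ ℓ (S i) θ - risk ℓ P θ)
      (Measure.pi fun _ ↦ P) :=
    iIndepFun_pi (X := fun _ z ↦ ℓ z θ - risk ℓ P θ) fun _ ↦ hℓmeas.sub_const _
  have hterm (i : Fin n) : HasSubgaussianMGF (fun S : Fin n → Z ↦ ℓ (S i) θ - risk ℓ P θ)
      ((‖b - a‖₊ / 2) ^ 2) (Measure.pi fun _ ↦ P) := by
    have heval := Measure.quasiMeasurePreserving_eval (fun _ : Fin n ↦ P) i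
    rw [← hmean i]
    exact hasSubgaussianMGF_of_mem_Icc (hℓmeas.comp_quasiMeasurePreserving heval) (heval.ae hℓ)
  convert (HasSubgaussianMGF.sum_of_iIndepFun hindep (s := Finset.univ)
    fun i _ ↦ hterm i).const_mul (n : ℝ)⁻¹ using 1
  · ext S
    simp [empRisk, Finset.sum_sub_distrib, mul_sub, hn', div_eq_inv_mul]
  · ext
    change ((‖b - a‖₊ : ℝ) / 2) ^ 2 / n =
      (n : ℝ)⁻¹ ^ 2 * ((∑ _i : Fin n, (‖b - a‖₊ / 2) ^ 2 : NNReal) : ℝ)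
    simp only [Finset.sum_const, Finset.card_univ, Fintype.card_fin, nsmul_eq_mul,
      NNReal.coe_div, NNReal.coe_mul, NNReal.coe_pow, NNReal.coe_natCast, NNReal.coe_ofNat]
    field_simp

variable [MeasurableSpace Θ]

theorem measurable_risk [SFinite P] (hℓmeas : Measurable (Function.uncurry ℓ)) :
    Measurable (risk ℓ P) :=
  hℓmeas.stronglyMeasurable.integral_prod_left'.measurable

theorem risk_mem_Icc [IsProbabilityMeasure P] (hℓmeas : Measurable (Function.uncurry ℓ))
    (hℓ : ∀ z θ, ℓ z θ ∈ Set.Icc a b) (θ : Θ) : risk ℓ P θ ∈ Set.Icc a b :=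
  integral_mem_Icc hℓmeas.of_uncurry_right.aemeasurable (ae_of_all _ fun z ↦ hℓ z θ)

theorem measurable_uncurry_empRisk (hℓmeas : Measurable (Function.uncurry ℓ)) :
    Measurable (Function.uncurry (empRisk ℓ : (Fin n → Z) → Θ → ℝ)) :=
  (Finset.measurable_sum _ fun i _ ↦ hℓmeas.comp
    (((measurable_pi_apply i).comp measurable_fst).prodMk measurable_snd)).div_const _

theorem integrable_uncurry_empRisk [IsFiniteMeasure P] {ρ : Measure Θ} [IsFiniteMeasure ρ]
    (hn : 0 < n) (hℓmeas : Measurable (Function.uncurry ℓ))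
    (hℓ : ∀ z θ, ℓ z θ ∈ Set.Icc a b) :
    Integrable (Function.uncurry (empRisk ℓ : (Fin n → Z) → Θ → ℝ))
      ((Measure.pi fun _ ↦ P).prod ρ) :=
  .of_mem_Icc a b (measurable_uncurry_empRisk hℓmeas).aemeasurable
    (ae_of_all _ fun x ↦ empRisk_mem_Icc hn hℓ x.1 x.2)

theorem measurable_uncurry_mul_empRisk_sub_risk [SFinite P]
    (hℓmeas : Measurable (Function.uncurry ℓ)) (t : ℝ) :
    Measurable (Function.uncurry fun (S : Fin n → Z) θ ↦ t * (empRisk ℓ S θ - risk ℓ P θ)) :=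
  ((measurable_uncurry_empRisk hℓmeas).sub
    ((measurable_risk hℓmeas).comp measurable_snd)).const_mul t

theorem mul_empRisk_sub_risk_mem_Icc [IsProbabilityMeasure P] (hn : 0 < n)
    (hℓmeas : Measurable (Function.uncurry ℓ)) (hℓ : ∀ z θ, ℓ z θ ∈ Set.Icc a b) (t : ℝ)
    (S : Fin n → Z) (θ : Θ) :
    t * (empRisk ℓ S θ - risk ℓ P θ) ∈ Set.Icc (-(|t| * (b - a))) (|t| * (b - a)) := by
  have hE := empRisk_mem_Icc hn hℓ S θ
  have hR := risk_mem_Icc (P := P) hℓmeas hℓ θ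
  have hdev : |empRisk ℓ S θ - risk ℓ P θ| ≤ b - a :=
    abs_sub_le_iff.2 ⟨sub_le_sub hE.2 hR.1, sub_le_sub hR.2 hE.1⟩
  rw [Set.mem_Icc, ← abs_le, abs_mul]
  gcongr

end Risk

section Gibbs

variable {Z Θ : Type*} [MeasurableSpace Θ] {ℓ : Z → Θ → ℝ} {a b α : ℝ}
  {π ρ : Measure Θ} {n : ℕ}

theorem gibbs_eq_tilted (S : Fin n → Z) :
    gibbs ℓ π α S = π.tilted fun θ ↦ -(α * n) * empRisk ℓ S θ := rfl

variable [MeasurableSpace Z]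

theorem measurable_integral_gibbs [SFinite π] (hℓmeas : Measurable (Function.uncurry ℓ))
    {g : Θ → ℝ} (hg : Measurable g) :
    Measurable fun S : Fin n → Z ↦ ∫ θ, g θ ∂(gibbs ℓ π α S) := by
  have hweight : Measurable (Function.uncurry fun (S : Fin n → Z) θ ↦
      Real.exp (-(α * n) * empRisk ℓ S θ)) :=
    ((measurable_uncurry_empRisk hℓmeas).const_mul _).exp
  simp only [gibbs_eq_tilted, integral_tilted]
  have hnorm : Measurable fun S : Fin n → Z ↦ ∫ θ, Real.exp (-(α * n) * empRisk ℓ S θ) ∂π :=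
    hweight.stronglyMeasurable.integral_prod_right.measurable
  exact ((hweight.div (hnorm.comp measurable_fst)).smul
    (hg.comp measurable_snd)).stronglyMeasurable.integral_prod_right.measurable

theorem isProbabilityMeasure_gibbs [IsProbabilityMeasure π] (hn : 0 < n)
    (hℓmeas : Measurable (Function.uncurry ℓ)) (hℓ : ∀ z θ, ℓ z θ ∈ Set.Icc a b)
    (S : Fin n → Z) : IsProbabilityMeasure (gibbs ℓ π α S) :=
  isProbabilityMeasure_tilted <| integrable_exp_mul_of_mem_Icc
    (measurable_uncurry_empRisk hℓmeas).of_uncurry_left.aemeasurable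
    (ae_of_all _ (empRisk_mem_Icc hn hℓ S))

variable {P : Measure Z} [IsProbabilityMeasure P]

theorem integral_risk_gibbs_le_riskEstimate [IsProbabilityMeasure π] [IsProbabilityMeasure ρ]
    (hn : 0 < n) (hℓmeas : Measurable (Function.uncurry ℓ)) (hℓ : ∀ z θ, ℓ z θ ∈ Set.Icc a b)
    (hα : 0 < α) (hρ : klDiv ρ π ≠ ⊤) (S : Fin n → Z) :
    ∫ θ, risk ℓ P θ ∂(gibbs ℓ π α S) ≤ riskEstimate ℓ S ρ π α +
      Real.log (∫ θ, Real.exp (-(α * n) * (empRisk ℓ S θ - risk ℓ P θ)) ∂π) / (α * n) := by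
  have hαn : 0 < α * n := by positivity
  have := isProbabilityMeasure_gibbs (π := π) (α := α) hn hℓmeas hℓ S
  have hRmeas : Measurable (risk ℓ P) := measurable_risk hℓmeas
  have hEmeas : Measurable (empRisk ℓ S) := (measurable_uncurry_empRisk hℓmeas).of_uncurry_left
  have hE (μ : Measure Θ) [IsFiniteMeasure μ] : Integrable (empRisk ℓ S) μ :=
    .of_mem_Icc a b hEmeas.aemeasurable (ae_of_all _ (empRisk_mem_Icc hn hℓ S))
  have hweight : Integrable (fun θ ↦ Real.exp (-(α * n) * empRisk ℓ S θ)) π :=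
    integrable_exp_mul_of_mem_Icc hEmeas.aemeasurable
      (ae_of_all _ (empRisk_mem_Icc hn hℓ S))
  have hexponent (θ : Θ) : -(α * n) * empRisk ℓ S θ + α * n * risk ℓ P θ =
      -(α * n) * (empRisk ℓ S θ - risk ℓ P θ) := by ring
  have hdev : Integrable (fun θ ↦ Real.exp (-(α * n) * (empRisk ℓ S θ - risk ℓ P θ))) π :=
    integrable_exp_of_mem_Icc ((hEmeas.sub hRmeas).const_mul _).aemeasurable
      (ae_of_all _ (mul_empRisk_sub_risk_mem_Icc hn hℓmeas hℓ _ S))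
  have hposterior : α * n * ∫ θ, risk ℓ P θ ∂(gibbs ℓ π α S) ≤
      Real.log (∫ θ, Real.exp (-(α * n) * (empRisk ℓ S θ - risk ℓ P θ)) ∂π) -
        Real.log (∫ θ, Real.exp (-(α * n) * empRisk ℓ S θ) ∂π) := by
    simp_rw [← hexponent] at hdev ⊢
    rw [← integral_const_mul]
    exact integral_tilted_le_log_sub_log hweight hdev (.const_mul (.of_mem_Icc a b
      hRmeas.aemeasurable (ae_of_all _ (risk_mem_Icc hℓmeas hℓ))) _)
  have hcomparison : -(α * n) * ∫ θ, empRisk ℓ S θ ∂ρ - (klDiv ρ π).toReal ≤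
      Real.log (∫ θ, Real.exp (-(α * n) * empRisk ℓ S θ) ∂π) := by
    rw [← integral_const_mul]
    exact integral_sub_klDiv_le_log_integral_exp hρ ((hE ρ).const_mul _) hweight
  rw [riskEstimate, add_assoc, ← add_div, ← sub_le_iff_le_add', le_div_iff₀' hαn]
  linarith

theorem integral_log_integral_exp_empRisk_sub_risk_le [IsProbabilityMeasure π] (hn : 0 < n)
    (hℓmeas : Measurable (Function.uncurry ℓ)) (hℓ : ∀ z θ, ℓ z θ ∈ Set.Icc a b) (t : ℝ) :
    ∫ S : Fin n → Z, Real.log (∫ θ, Real.exp (t * (empRisk ℓ S θ - risk ℓ P θ)) ∂π)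
      ∂(Measure.pi fun _ ↦ P) ≤ t ^ 2 * (b - a) ^ 2 / (8 * n) := by
  refine integral_log_integral_exp_le (measurable_uncurry_mul_empRisk_sub_risk hℓmeas t)
    (mul_empRisk_sub_risk_mem_Icc hn hℓmeas hℓ t) fun θ ↦ ?_
  refine ((hasSubgaussianMGF_empRisk_sub_risk hn hℓmeas.of_uncurry_right.aemeasurable
    (ae_of_all _ fun z ↦ hℓ z θ)).mgf_le t).trans_eq ?_
  congr 1
  simp only [NNReal.coe_div, NNReal.coe_pow, NNReal.coe_natCast, coe_nnnorm, NNReal.coe_ofNat,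
    Real.norm_eq_abs, div_pow, sq_abs]
  ring

theorem integrable_integral_empRisk [IsFiniteMeasure ρ] (hn : 0 < n)
    (hℓmeas : Measurable (Function.uncurry ℓ)) (hℓ : ∀ z θ, ℓ z θ ∈ Set.Icc a b) :
    Integrable (fun S : Fin n → Z ↦ ∫ θ, empRisk ℓ S θ ∂ρ) (Measure.pi fun _ ↦ P) :=
  (integrable_uncurry_empRisk hn hℓmeas hℓ).integral_prod_left

theorem integral_integral_empRisk [IsFiniteMeasure ρ] (hn : 0 < n)
    (hℓmeas : Measurable (Function.uncurry ℓ)) (hℓ : ∀ z θ, ℓ z θ ∈ Set.Icc a b) :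
    ∫ S : Fin n → Z, ∫ θ, empRisk ℓ S θ ∂ρ ∂(Measure.pi fun _ ↦ P) = ∫ θ, risk ℓ P θ ∂ρ := by
  rw [integral_integral_swap (integrable_uncurry_empRisk hn hℓmeas hℓ)]
  exact integral_congr_ae <| ae_of_all _ fun θ ↦ integral_empRisk hn <|
    .of_mem_Icc a b hℓmeas.of_uncurry_right.aemeasurable (ae_of_all _ fun z ↦ hℓ z θ)

theorem integral_risk_gibbs_le [IsProbabilityMeasure π] [IsProbabilityMeasure ρ] (hn : 0 < n)
    (hℓmeas : Measurable (Function.uncurry ℓ)) (hℓ : ∀ z θ, ℓ z θ ∈ Set.Icc a b)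
    (hα : 0 < α) (hρ : klDiv ρ π ≠ ⊤) :
    ∫ S, ∫ θ, risk ℓ P θ ∂(gibbs ℓ π α S) ∂(Measure.pi fun _ : Fin n ↦ P) ≤
      ∫ θ, risk ℓ P θ ∂ρ + (klDiv ρ π).toReal / (α * n) + α * (b - a) ^ 2 / 8 := by
  have hrisk : Integrable (fun S : Fin n → Z ↦ ∫ θ, risk ℓ P θ ∂(gibbs ℓ π α S))
      (Measure.pi fun _ ↦ P) := by
    refine .of_mem_Icc a b (measurable_integral_gibbs hℓmeas (measurable_risk hℓmeas)).aemeasurable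
      (ae_of_all _ fun S ↦ ?_)
    have := isProbabilityMeasure_gibbs (π := π) (α := α) hn hℓmeas hℓ S
    exact integral_mem_Icc (measurable_risk hℓmeas).aemeasurable
      (ae_of_all _ (risk_mem_Icc hℓmeas hℓ))
  have hemp : Integrable (fun S : Fin n → Z ↦ riskEstimate ℓ S ρ π α) (Measure.pi fun _ ↦ P) :=
    (integrable_integral_empRisk hn hℓmeas hℓ).add (integrable_const _)
  have hdev : Integrable (fun S : Fin n → Z ↦
      Real.log (∫ θ, Real.exp (-(α * n) * (empRisk ℓ S θ - risk ℓ P θ)) ∂π) / (α * n))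
      (Measure.pi fun _ ↦ P) :=
    (integrable_log_integral_exp (measurable_uncurry_mul_empRisk_sub_risk hℓmeas _)
      (mul_empRisk_sub_risk_mem_Icc hn hℓmeas hℓ _)).div_const _
  calc ∫ S, ∫ θ, risk ℓ P θ ∂(gibbs ℓ π α S) ∂(Measure.pi fun _ : Fin n ↦ P)
    _ ≤ ∫ S : Fin n → Z, riskEstimate ℓ S ρ π α +
          Real.log (∫ θ, Real.exp (-(α * n) * (empRisk ℓ S θ - risk ℓ P θ)) ∂π) / (α * n)
          ∂(Measure.pi fun _ ↦ P) :=
      integral_mono hrisk (hemp.add hdev)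
        (integral_risk_gibbs_le_riskEstimate hn hℓmeas hℓ hα hρ)
    _ = ∫ θ, risk ℓ P θ ∂ρ + (klDiv ρ π).toReal / (α * n) +
          (∫ S : Fin n → Z,
            Real.log (∫ θ, Real.exp (-(α * n) * (empRisk ℓ S θ - risk ℓ P θ)) ∂π)
            ∂(Measure.pi fun _ ↦ P)) / (α * n) := by
      rw [integral_add hemp hdev, integral_div]
      simp only [riskEstimate]
      rw [integral_add (integrable_integral_empRisk hn hℓmeas hℓ) (integrable_const _),
        integral_integral_empRisk hn hℓmeas hℓ, integral_const, probReal_univ, one_smul]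
    _ ≤ ∫ θ, risk ℓ P θ ∂ρ + (klDiv ρ π).toReal / (α * n) +
          ((-(α * n)) ^ 2 * (b - a) ^ 2 / (8 * n)) / (α * n) := by
      gcongr
      exact integral_log_integral_exp_empRisk_sub_risk_le hn hℓmeas hℓ _
    _ = ∫ θ, risk ℓ P θ ∂ρ + (klDiv ρ π).toReal / (α * n) + α * (b - a) ^ 2 / 8 := by
      field_simp

theorem integral_risk_gibbs_le_of_sublevel [IsProbabilityMeasure π] (hn : 0 < n)
    (hℓmeas : Measurable (Function.uncurry ℓ)) (hℓ : ∀ z θ, ℓ z θ ∈ Set.Icc a b)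
    (hα : 0 < α) {r : ℝ} (hr : π {θ | risk ℓ P θ ≤ r} ≠ 0) :
    ∫ S, ∫ θ, risk ℓ P θ ∂(gibbs ℓ π α S) ∂(Measure.pi fun _ : Fin n ↦ P) ≤
      r - Real.log (π.real {θ | risk ℓ P θ ≤ r}) / (α * n) + α * (b - a) ^ 2 / 8 := by
  set B := {θ | risk ℓ P θ ≤ r}
  have hB : MeasurableSet B := measurable_risk hℓmeas measurableSet_Iic
  have := cond_isProbabilityMeasure hr
  have hkl := klDiv_cond_self hB hr
  have hrisk : ∫ θ, risk ℓ P θ ∂π[|B] ≤ r :=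
    (integral_mem_Icc (measurable_risk hℓmeas).aemeasurable <| (ae_cond_mem hB).mono
      fun θ hθ ↦ ⟨(risk_mem_Icc hℓmeas hℓ θ).1, hθ⟩).2
  calc ∫ S, ∫ θ, risk ℓ P θ ∂(gibbs ℓ π α S) ∂(Measure.pi fun _ : Fin n ↦ P)
    _ ≤ ∫ θ, risk ℓ P θ ∂π[|B] + (klDiv π[|B] π).toReal / (α * n) + α * (b - a) ^ 2 / 8 :=
      integral_risk_gibbs_le hn hℓmeas hℓ hα (hkl ▸ ENNReal.ofReal_ne_top)
    _ ≤ r - Real.log (π.real B) / (α * n) + α * (b - a) ^ 2 / 8 := by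
      rw [hkl, ENNReal.toReal_ofReal
        (neg_nonneg.2 (Real.log_nonpos measureReal_nonneg measureReal_le_one)), neg_div,
        ← sub_eq_add_neg]
      gcongr

theorem integral_risk_gibbs_le_of_rpow_le_prior [IsProbabilityMeasure π] (hn : 0 < n)
    (hℓmeas : Measurable (Function.uncurry ℓ)) (hℓ : ∀ z θ, ℓ z θ ∈ Set.Icc a b)
    (hα : 0 < α) {s d κ : ℝ} (hs : 0 < s) (hκ : 0 < κ)
    (hmass : s ^ d / κ ≤ π.real {θ | risk ℓ P θ - optRisk ℓ P ≤ s}) :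
    ∫ S, ∫ θ, risk ℓ P θ ∂(gibbs ℓ π α S) ∂(Measure.pi fun _ : Fin n ↦ P) ≤
      optRisk ℓ P + s - (d * Real.log s - Real.log κ) / (α * n) + α * (b - a) ^ 2 / 8 := by
  simp only [sub_le_iff_le_add'] at hmass
  have hsd : 0 < s ^ d := Real.rpow_pos_of_pos hs d
  have hmass_ne : π {θ | risk ℓ P θ ≤ optRisk ℓ P + s} ≠ 0 :=
    (measureReal_ne_zero_iff).1 ((div_pos hsd hκ).trans_le hmass).ne'
  have hlog : d * Real.log s - Real.log κ ≤
      Real.log (π.real {θ | risk ℓ P θ ≤ optRisk ℓ P + s}) := by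
    rw [← Real.log_rpow hs, ← Real.log_div hsd.ne' hκ.ne']
    exact Real.log_le_log (div_pos hsd hκ) hmass
  refine (integral_risk_gibbs_le_of_sublevel hn hℓmeas hℓ hα hmass_ne).trans ?_
  gcongr

end Gibbs

section SlowRate

/-- The excess-risk level `(C/2)√(d/(2n))` at which the prior mass condition of exponent `d` is
used. With `α = 2√(2d)/(√n C)` it equals both the dimension cost `d/(αn)` and the deviation cost
`αC²/8`. -/
def slowRateRadius (C d : ℝ) (n : ℕ) : ℝ := C / 2 * √(d / (2 * n))

variable {C d α : ℝ} {n : ℕ}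

theorem slowRateRadius_pos (hC : 0 < C) (hd : 0 < d) (hn : 0 < n) : 0 < slowRateRadius C d n := by
  unfold slowRateRadius
  positivity

theorem sq_slowRateRadius (hd : 0 ≤ d) : slowRateRadius C d n ^ 2 = C ^ 2 * d / (8 * n) := by
  rw [slowRateRadius, mul_pow, Real.sq_sqrt (by positivity)]
  ring

theorem slowRateRadius_le_one (hd : 0 ≤ d) (hdn : C ^ 2 * d ≤ 8 * n) :
    slowRateRadius C d n ≤ 1 := by
  refine le_of_sq_le_sq ?_ zero_le_one
  rw [sq_slowRateRadius hd, one_pow]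
  exact div_le_one_of_le₀ hdn (by positivity)

theorem mul_sq_div_eight_eq_slowRateRadius (hC : C ≠ 0)
    (hα : α = 2 * √(2 * d) / (√n * C)) : α * C ^ 2 / 8 = slowRateRadius C d n := by
  have hsqrt : √(d / (2 * n)) = √(2 * d) / (2 * √n) := by
    rw [show d / (2 * n) = 2 * d / (2 ^ 2 * n) by ring, Real.sqrt_div' _ (by positivity),
      Real.sqrt_mul (sq_nonneg 2), Real.sqrt_sq zero_le_two]
  rw [slowRateRadius, hsqrt, hα]
  field_simp
  ring

theorem mul_slowRateRadius (hC : C ≠ 0) (hd : 0 ≤ d) (hn : 0 < n)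
    (hα : α = 2 * √(2 * d) / (√n * C)) : α * n * slowRateRadius C d n = d := by
  have hn' : (n : ℝ) ≠ 0 := by exact_mod_cast hn.ne'
  have hαsq : α ^ 2 = 8 * d / (n * C ^ 2) := by
    rw [hα, div_pow, mul_pow, mul_pow, Real.sq_sqrt (by positivity), Real.sq_sqrt n.cast_nonneg]
    ring
  calc α * n * slowRateRadius C d n
    _ = α ^ 2 * (n * C ^ 2) / 8 := by rw [← mul_sq_div_eight_eq_slowRateRadius hC hα]; ring
    _ = d := by rw [hαsq]; field_simp

theorem half_log_eq_two_sub_log_slowRateRadius (hC : 0 < C) (hd : 0 < d) (hn : 0 < n) :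
    1 / 2 * Real.log (8 * Real.exp 4 * n / (d * C ^ 2)) = 2 - Real.log (slowRateRadius C d n) := by
  have hs := slowRateRadius_pos hC hd hn
  have hsq : 8 * Real.exp 4 * n / (d * C ^ 2) = Real.exp 4 / slowRateRadius C d n ^ 2 := by
    rw [sq_slowRateRadius hd.le]
    field_simp
  rw [hsq, Real.log_div (Real.exp_pos 4).ne' (pow_pos hs 2).ne', Real.log_exp, Real.log_pow]
  push_cast
  ring

end SlowRate

/-- Corollary 2 of the paper, third statement: without Bernstein's condition, the
Gibbs posterior with `α = 2√(2d)/(√n C)` achieves the slow rate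
`(C/2)√(d/(2n)) ((1/2) log(8e⁴n/(dC²)) + (1/d) log κ)`. -/
theorem gibbs_slow_rate_of_prior_mass
    {Z Θ : Type*} [MeasurableSpace Z] [MeasurableSpace Θ]
    (ℓ : Z → Θ → ℝ) (hℓmeas : Measurable (Function.uncurry ℓ))
    (C : ℝ) (hC : 0 < C) (hℓ : ∀ z θ, ℓ z θ ∈ Set.Icc 0 C)
    (P : Measure Z) [IsProbabilityMeasure P]
    (π : Measure Θ) [IsProbabilityMeasure π]
    (n : ℕ) (hn : 0 < n)
    (d κ : ℝ) (hd : 0 < d) (hκ : 1 ≤ κ) (hdn : C ^ 2 * d ≤ 8 * n)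
    (hmass : ∀ s ∈ Set.Ioc (0 : ℝ) 1,
      s ^ d / κ ≤ (π {θ | risk ℓ P θ - optRisk ℓ P ≤ s}).toReal)
    (α : ℝ) (hα : α = 2 * Real.sqrt (2 * d) / (Real.sqrt n * C)) :
    (∫ S, ∫ θ, risk ℓ P θ ∂(gibbs ℓ π α S) ∂(Measure.pi fun _ : Fin n => P)) ≤
      optRisk ℓ P + (C / 2) * Real.sqrt (d / (2 * n)) *
        ((1 / 2) * Real.log (8 * Real.exp 4 * n / (d * C ^ 2)) +
          (1 / d) * Real.log κ) := by
  have hs := slowRateRadius_pos hC hd hn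
  have hcomplexity := mul_slowRateRadius hC.ne' hd.le hn hα
  have hdeviation := mul_sq_div_eight_eq_slowRateRadius hC.ne' hα
  have hαpos : 0 < α := by rw [hα]; positivity
  have hbound := integral_risk_gibbs_le_of_rpow_le_prior hn hℓmeas hℓ hαpos hs
    (zero_lt_one.trans_le hκ) (hmass _ ⟨hs, slowRateRadius_le_one hd.le hdn⟩)
  rw [half_log_eq_two_sub_log_slowRateRadius hC hd hn, ← slowRateRadius]
  refine hbound.trans_eq ?_
  rw [sub_zero, hdeviation, eq_div_of_mul_eq hs.ne' hcomplexity]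
  field_simp
  ring

end
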